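/- arXiv:2209.09392 — 9 statements merged into one kernel-verified Lean document; each statement's English description precedes it below -/
import Mathlib

section
/- Let k be a field of characteristic zero and A a commutative k-algebra (not assumed noetherian). Suppose ι : k[t₁, …, t_s] → A is an injective k-algebra homomorphism from the polynomial ring in s ≥ 1 variables. Then the element dι(t₁) ∧ dι(t₂) ∧ … ∧ dι(t_s) is nonzero in the s-th exterior power ⋀^s_A Ω_{A/k}. -/
theorem aux_formallySmooth_field (F K : Type*) [Field F] [Field K] [CharZero F] [Algebra F K] :
    Algebra.FormallySmooth F K := by
  obtain ⟨s, hs⟩ := exists_isTranscendenceBasis F K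
  have h := hs.isAlgebraic_field
  have : Algebra.IsSeparable (IntermediateField.adjoin F (Set.range ((↑) : s → K))) K := by
    have := h
    infer_instance
  exact .of_algebraicIndependent_of_isSeparable hs.1

theorem aux_linearIndependent (k K : Type*) [Field k] [CharZero k] [Field K] [Algebra k K]
    (s : ℕ) [Algebra (MvPolynomial (Fin s) k) K] [IsScalarTower k (MvPolynomial (Fin s) k) K]
    (hι : Function.Injective (algebraMap (MvPolynomial (Fin s) k) K)) :
    LinearIndependent K (fun i : Fin s =>
      KaehlerDifferential.D k K (algebraMap _ K (MvPolynomial.X i : MvPolynomial (Fin s) k))) := by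
  let P := MvPolynomial (Fin s) k
  let F := FractionRing P
  have : FaithfulSMul P K := (faithfulSMul_iff_algebraMap_injective _ _).2 hι
  let _ : Algebra F K := FractionRing.liftAlgebra P K
  have : IsScalarTower P F K := inferInstance
  have : CharZero F := charZero_of_injective_algebraMap (algebraMap k F).injective
  have := aux_formallySmooth_field F K
  have : Algebra.FormallySmooth P F := .of_isLocalization (nonZeroDivisors P)
  have hPK : Algebra.FormallySmooth P K := .comp P F K
  have hsub : Subsingleton (Algebra.H1Cotangent P K) := hPK.subsingleton_h1Cotangent
  have hinj : Function.Injective (KaehlerDifferential.mapBaseChange k P K) := by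
    rw [injective_iff_map_eq_zero]
    intro x hx
    obtain ⟨y, rfl⟩ := (Algebra.H1Cotangent.exact_δ_mapBaseChange k P K x).1 hx
    rw [Subsingleton.elim y 0, map_zero]
  have hb := ((KaehlerDifferential.mvPolynomialBasis k (Fin s)).baseChange K).linearIndependent
  have := hb.map' _ (LinearMap.ker_eq_bot.2 hinj)
  have he : (fun i : Fin s =>
      KaehlerDifferential.D k K (algebraMap _ K (MvPolynomial.X i : MvPolynomial (Fin s) k))) =
      (KaehlerDifferential.mapBaseChange k P K) ∘
        ((KaehlerDifferential.mvPolynomialBasis k (Fin s)).baseChange K) := by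
    ext i
    simp [P, KaehlerDifferential.mvPolynomialBasis_apply]
  rw [he]
  exact this

/-- Let `k` be a field of characteristic zero and `A` a commutative `k`-algebra (not assumed
noetherian). If `ι : k[t₁, …, t_s] → A` is an injective `k`-algebra homomorphism with `s ≥ 1`,
then `dι(t₁) ∧ … ∧ dι(t_s)` is a nonzero element of `⋀^s_A Ω_{A/k}`. -/
theorem wedge_of_differentials_of_injection_ne_zero
    (k A : Type*) [Field k] [CharZero k] [CommRing A] [Algebra k A]
    (s : ℕ) (hs : 1 ≤ s) (ι : MvPolynomial (Fin s) k →ₐ[k] A)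
    (hι : Function.Injective ι) :
    ExteriorAlgebra.ιMulti A s
      (fun i => KaehlerDifferential.D k A (ι (MvPolynomial.X i))) ≠ 0 := by
  obtain ⟨p, hp, hpc⟩ := Ideal.exists_comap_eq_of_mem_minimalPrimes_of_injective
    (f := ι.toRingHom) hι ⊥ (by simp [IsDomain.minimalPrimes_eq_singleton_bot])
  let K := p.ResidueField
  let φ : MvPolynomial (Fin s) k →ₐ[k] K := (IsScalarTower.toAlgHom k A K).comp ι
  have hφ : Function.Injective φ := by
    rw [injective_iff_map_eq_zero]
    intro x hx
    have : ι x ∈ p := Ideal.algebraMap_residueField_eq_zero.1 hx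
    have : x ∈ Ideal.comap ι.toRingHom p := this
    rw [hpc] at this
    simpa using this
  let _ : Algebra (MvPolynomial (Fin s) k) K := φ.toRingHom.toAlgebra
  have : IsScalarTower k (MvPolynomial (Fin s) k) K :=
    .of_algebraMap_eq fun x => (φ.commutes x).symm
  have hli := aux_linearIndependent k K s hφ
  obtain ⟨g, hg⟩ : ∃ g : Ω[K⁄k] →ₗ[K] (Fin s → K), ∀ i,
      g (KaehlerDifferential.D k K (φ (MvPolynomial.X i))) = Pi.single i 1 := by
    obtain ⟨g, hg⟩ := LinearMap.exists_leftInverse_of_injective _ (LinearMap.ker_eq_bot.2 hli)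
    refine ⟨(Finsupp.linearEquivFunOnFinite K K (Fin s)).toLinearMap.comp g, fun i => ?_⟩
    have h := LinearMap.congr_fun hg (Finsupp.single i 1)
    simp only [LinearMap.comp_apply, Finsupp.linearCombination_single, one_smul,
      LinearMap.id_apply] at h
    have h' : g (KaehlerDifferential.D k K (φ (MvPolynomial.X i))) = Finsupp.single i 1 := h
    rw [LinearMap.comp_apply, h']
    exact Finsupp.linearEquivFunOnFinite_single _ _ _ i 1
  let G : Ω[A⁄k] →ₗ[A] (Fin s → K) :=
    (g.restrictScalars A).comp (KaehlerDifferential.map k k A K)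
  let d0 := (Matrix.detRowAlternating (n := Fin s) (R := K))
  let d : (Fin s → K) [⋀^Fin s]→ₗ[A] K :=
    { d0.toMultilinearMap.restrictScalars A with
      map_eq_zero_of_eq' := d0.map_eq_zero_of_eq' }
  intro h0
  have h1 := congrArg (ExteriorAlgebra.liftAlternating (R := A)
    (Function.update 0 s (d.compLinearMap G))) h0
  rw [ExteriorAlgebra.liftAlternating_apply_ιMulti, map_zero, Function.update_self] at h1
  have h2 : Matrix.det (fun i => G (KaehlerDifferential.D k A (ι (MvPolynomial.X i)))) = 0 := h1
  have h3 : (fun i => G (KaehlerDifferential.D k A (ι (MvPolynomial.X i)))) =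
      (1 : Matrix (Fin s) (Fin s) K) := by
    funext i
    have : G (KaehlerDifferential.D k A (ι (MvPolynomial.X i))) = Pi.single i 1 := by
      rw [← hg]
      simp [G, φ]
    rw [this]
    ext j
    simp [Matrix.one_apply, Pi.single_apply, eq_comm]
  rw [h3] at h2
  simp at h2
end

section
/- Let k be a field of characteristic zero and A a commutative k-algebra (not assumed noetherian). If the s-th exterior power ⋀^s_A Ω_{A/k} = 0, then there is no injective k-algebra homomorphism from the polynomial ring k[t₁, …, t_s] to A. -/
open scoped TensorProduct

theorem aux_field {k L ι : Type*} [Field k] [CharZero k] [Field L] [Algebra k L] {x : ι → L}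
    (hx : IsTranscendenceBasis k x) :
    ∃ b : Module.Basis ι L (Ω[L⁄k]), ∀ i, b i = KaehlerDifferential.D k L (x i) := by
  let : Algebra (MvPolynomial ι k) L := (MvPolynomial.aeval x).toAlgebra
  have : IsScalarTower k (MvPolynomial ι k) L :=
    IsScalarTower.of_algebraMap_eq' (MvPolynomial.aeval x).comp_algebraMap.symm
  have hinj : Function.Injective (algebraMap (MvPolynomial ι k) L) := hx.1
  have : FaithfulSMul (MvPolynomial ι k) L := (faithfulSMul_iff_algebraMap_injective _ _).2 hinj
  let := FractionRing.liftAlgebra (MvPolynomial ι k) L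
  have := FractionRing.isScalarTower_liftAlgebra (MvPolynomial ι k) L
  have : CharZero (FractionRing (MvPolynomial ι k)) :=
    charZero_of_injective_algebraMap (R := k) (FaithfulSMul.algebraMap_injective _ _)
  have h1 : Algebra.IsAlgebraic (Algebra.adjoin k (Set.range x)) L := hx.isAlgebraic
  have : Algebra.IsAlgebraic (MvPolynomial ι k) L := by
    refine Algebra.IsAlgebraic.of_ringHom_of_comp_eq (S := Algebra.adjoin k (Set.range x)) (B := L)
      hx.1.aevalEquiv (RingHom.id L) hx.1.aevalEquiv.surjective Function.injective_id ?_
    ext i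
    · simpa using IsScalarTower.algebraMap_apply k (MvPolynomial ι k) L _
    · simp [RingHom.algebraMap_toAlgebra]
  have : Algebra.IsAlgebraic (FractionRing (MvPolynomial ι k)) L :=
    (IsFractionRing.comap_isAlgebraic_iff (A := MvPolynomial ι k)).1 inferInstance
  have : Algebra.FormallyEtale (FractionRing (MvPolynomial ι k)) L :=
    Algebra.FormallyEtale.of_isSeparable _ L
  have : Algebra.FormallyEtale (MvPolynomial ι k) (FractionRing (MvPolynomial ι k)) :=
    .of_isLocalization (nonZeroDivisors _)
  have : Algebra.FormallyEtale (MvPolynomial ι k) L :=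
    .comp _ (FractionRing (MvPolynomial ι k)) _
  refine ⟨((KaehlerDifferential.mvPolynomialBasis k ι).baseChange L).map
    (KaehlerDifferential.tensorKaehlerEquivOfFormallyEtale k (MvPolynomial ι k) L), fun i => ?_⟩
  simp
  congr 1
  exact MvPolynomial.aeval_X _ _

/-- Let `k` be a field of characteristic zero and `A` a commutative `k`-algebra (not
necessarily noetherian). If `⋀^s_A Ω_{A/k} = 0`, then there is no injective `k`-algebra
homomorphism from the polynomial ring `k[t₁, …, t_s]` to `A`. -/
theorem no_polynomial_injection_of_vanishing_exterior_power
    (k A : Type*) [Field k] [CharZero k] [CommRing A] [Algebra k A]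
    (s : ℕ) (h : Subsingleton (⋀[A]^s (Ω[A⁄k]))) :
    ¬ ∃ ι : MvPolynomial (Fin s) k →ₐ[k] A, Function.Injective ι := by
  rintro ⟨f, hf⟩
  obtain ⟨p, hp, hpc⟩ := Ideal.exists_comap_eq_of_mem_minimalPrimes_of_injective
    (f := (f : MvPolynomial (Fin s) k →+* A)) hf ⊥ (by simp [IsDomain.minimalPrimes_eq_singleton_bot])
  let L := p.ResidueField
  let v : Fin s → L := fun i => algebraMap A L (f (MvPolynomial.X i))
  have hv : AlgebraicIndependent k v := by
    have e : (MvPolynomial.aeval v : MvPolynomial (Fin s) k →ₐ[k] L) =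
        (IsScalarTower.toAlgHom k A L).comp f := by
      ext i; simp [v]
    rw [AlgebraicIndependent, e, injective_iff_map_eq_zero]
    intro a ha
    have : f a ∈ p := by simpa [L] using ha
    have : a ∈ p.comap (f : MvPolynomial (Fin s) k →+* A) := this
    rw [hpc] at this
    exact this
  obtain ⟨t, ht, hb⟩ := exists_isTranscendenceBasis_superset (AlgebraicIndependent.coe_range hv)
  obtain ⟨b, hb⟩ := aux_field hb
  let j : Fin s → t := fun i => ⟨v i, ht ⟨i, rfl⟩⟩
  have hj : Function.Injective j := fun a c hac => AlgebraicIndependent.injective hv (congrArg Subtype.val hac)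
  let φ : Ω[A⁄k] →ₗ[A] (Fin s → L) := LinearMap.pi fun i =>
    ((b.coord (j i)).restrictScalars A).comp (KaehlerDifferential.map k k A L)
  let g : (Ω[A⁄k]) [⋀^Fin s]→ₗ[A] L :=
    { ((Matrix.detRowAlternating (R := L) (n := Fin s)).toMultilinearMap.restrictScalars
        A).compLinearMap (fun _ => φ) with
      map_eq_zero_of_eq' := fun w i l hw hil =>
        (Matrix.detRowAlternating (R := L) (n := Fin s)).map_eq_zero_of_eq
          (fun i => φ (w i)) (congrArg φ hw) hil }
  have h0 : exteriorPower.alternatingMapLinearEquiv g (exteriorPower.ιMulti A s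
      fun i => KaehlerDifferential.D k A (f (MvPolynomial.X i))) = 0 := by
    rw [Subsingleton.elim (exteriorPower.ιMulti A s _) 0, map_zero]
  rw [exteriorPower.alternatingMapLinearEquiv_apply_ιMulti] at h0
  have h1 : (fun i => φ (KaehlerDifferential.D k A (f (MvPolynomial.X i)))) =
      (1 : Matrix (Fin s) (Fin s) L) := by
    ext i l
    have : KaehlerDifferential.D k L (algebraMap A L (f (MvPolynomial.X i))) = b (j i) :=
      (hb (j i)).symm
    classical
    simp [φ, this, Matrix.one_apply, Finsupp.single_apply, hj.eq_iff]
  have h2 : Matrix.det (1 : Matrix (Fin s) (Fin s) L) = 0 := by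
    rw [← h1]; exact h0
  simp at h2
end

section
/- Let k be a field of characteristic zero and A a commutative k-algebra (not assumed noetherian). If Ω_{A/k} = 0, then A is integral over k (every element of A is the root of a monic polynomial with coefficients in k). -/
open Polynomial TensorProduct in
theorem aux_transcendental_field (k L : Type*) [Field k] [CharZero k] [Field L] [Algebra k L]
    [Algebra k[X] L] [IsScalarTower k k[X] L] [FaithfulSMul k[X] L]
    (h : Subsingleton (Ω[L⁄k])) : False := by
  letI : Algebra (FractionRing k[X]) L := FractionRing.liftAlgebra k[X] L
  haveI : IsScalarTower k[X] (FractionRing k[X]) L := FractionRing.isScalarTower_liftAlgebra k[X] L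
  haveI : CharZero (FractionRing k[X]) := algebraRat.charZero _
  have hs : Algebra.FormallySmooth (FractionRing k[X]) L := by
    obtain ⟨s, hs⟩ := exists_isTranscendenceBasis (FractionRing k[X]) L
    have := hs.isAlgebraic_field
    exact .of_algebraicIndependent_of_isSeparable hs.1
  have hs1 : Algebra.FormallySmooth k[X] (FractionRing k[X]) :=
    .of_isLocalization (nonZeroDivisors _)
  have hs2 : Algebra.FormallySmooth k[X] L := .comp _ (FractionRing k[X]) _
  have hsub : Subsingleton (L ⊗[k[X]] Ω[k[X]⁄k]) := by
    refine subsingleton_of_forall_eq 0 fun x => ?_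
    obtain ⟨y, rfl⟩ := (Algebra.H1Cotangent.exact_δ_mapBaseChange k k[X] L x).mp
      (Subsingleton.elim _ _)
    rw [Subsingleton.elim y 0, map_zero]
  let e : L ⊗[k[X]] Ω[k[X]⁄k] ≃ₗ[k[X]] L :=
    (TensorProduct.congr (LinearEquiv.refl k[X] L) (KaehlerDifferential.polynomialEquiv k)).trans
      (TensorProduct.rid k[X] L)
  have : Subsingleton L := e.symm.injective.subsingleton
  exact zero_ne_one (Subsingleton.elim (0 : L) 1)

open Polynomial in
/-- Let `k` be a field of characteristic zero and `A` a commutative `k`-algebra (not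
necessarily noetherian). If `Ω_{A/k} = 0`, then `A` is integral over `k`: every element of
`A` is the root of a monic polynomial with coefficients in `k`. -/
theorem integral_of_vanishing_kaehler_differentials
    (k A : Type*) [Field k] [CharZero k] [CommRing A] [Algebra k A]
    (h : Subsingleton (Ω[A⁄k])) :
    ∀ a : A, IsIntegral k a := by
  intro a
  rw [← isAlgebraic_iff_isIntegral]
  by_contra ha
  have hinj : Function.Injective (aeval a : k[X] →ₐ[k] A) :=
    transcendental_iff_injective.mp ha
  obtain ⟨p, hp, -, hd⟩ := Ideal.exists_le_prime_disjoint (⊥ : Ideal A)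
    ((nonZeroDivisors k[X]).map (aeval a : k[X] →ₐ[k] A)) (by
      rw [Set.disjoint_left]
      rintro x hx ⟨q, hq, rfl⟩
      have hx' : aeval a q = 0 := hx
      exact nonZeroDivisors.ne_zero hq (hinj (by rw [hx', map_zero])))
  let φ : k[X] →ₐ[k] p.ResidueField := (IsScalarTower.toAlgHom k A p.ResidueField).comp (aeval a)
  letI : Algebra k[X] p.ResidueField := φ.toRingHom.toAlgebra
  haveI : IsScalarTower k k[X] p.ResidueField := .of_algebraMap_eq fun x => (φ.commutes x).symm
  haveI : FaithfulSMul k[X] p.ResidueField := by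
    rw [faithfulSMul_iff_algebraMap_injective, injective_iff_map_eq_zero]
    intro q hq
    by_contra hq0
    have : aeval a q ∈ p := Ideal.algebraMap_residueField_eq_zero.mp hq
    exact Set.disjoint_left.mp hd this ⟨q, mem_nonZeroDivisors_of_ne_zero hq0, rfl⟩
  haveI : Algebra.FormallyUnramified k A := ⟨h⟩
  haveI : Algebra.FormallyUnramified A (Localization.AtPrime p) :=
    .of_isLocalization p.primeCompl
  haveI : Algebra.FormallyUnramified k (Localization.AtPrime p) := .comp k A _
  haveI : Algebra.FormallyUnramified k p.ResidueField := .comp k (Localization.AtPrime p) _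
  exact aux_transcendental_field k p.ResidueField inferInstance
end

section
/- Let k be a field and A a nonzero commutative k-algebra of finite type over k, with Krull dimension d. Then: (a) there exists an injective k-algebra homomorphism from the polynomial ring k[x₁, …, x_d] into A; and (b) for every n, if there exists an injective k-algebra homomorphism from the polynomial ring k[x₁, …, x_n] into A, then n ≤ d. In other words, the k-transcendence cardinality of A is finite and equal to the Krull dimension of A. -/
theorem aux_dim {R S : Type*} [CommRing R] [CommRing S] [Algebra R S] [Algebra.IsIntegral R S]
    (hinj : Function.Injective (algebraMap R S)) : ringKrullDim S = ringKrullDim R := by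
  apply le_antisymm
  · refine Order.krullDim_le_of_strictMono (PrimeSpectrum.comap (algebraMap R S)) ?_
    intro I J h
    exact Ideal.IsIntegral.comap_lt_comap (R := R) (I := I.asIdeal) (J := J.asIdeal) h
  · refine iSup_le fun p ↦ ?_
    have key : ∃ q : LTSeries (PrimeSpectrum S), q.length = p.length ∧
        PrimeSpectrum.comap (algebraMap R S) q.last = p.last := by
      induction p using RelSeries.inductionOn' with
      | singleton x =>
        have : FaithfulSMul R S := (faithfulSMul_iff_algebraMap_injective R S).mpr hinj
        obtain ⟨y, hy⟩ := Algebra.IsIntegral.comap_surjective R S x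
        exact ⟨RelSeries.singleton _ y, rfl, hy⟩
      | snoc p x hx hp =>
        obtain ⟨q, hq, hl⟩ := hp
        have hx' : p.last < x := hx
        have hle : q.last.asIdeal.comap (algebraMap R S) ≤ x.asIdeal := by
          have h2 := hx'.le
          rw [← hl] at h2
          exact h2
        obtain ⟨Q, hQ, hQp, hQc⟩ := Ideal.exists_ideal_over_prime_of_isIntegral_of_isPrime
          x.asIdeal q.last.asIdeal hle
        have hQx : PrimeSpectrum.comap (algebraMap R S) ⟨Q, hQp⟩ = x := PrimeSpectrum.ext hQc
        have hlt : q.last < (⟨Q, hQp⟩ : PrimeSpectrum S) := by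
          refine lt_of_le_of_ne hQ fun h ↦ ?_
          rw [h, hQx] at hl
          exact hx'.ne hl.symm
        exact ⟨q.snoc ⟨Q, hQp⟩ hlt, by simp [hq], by simp [hQx]⟩
    obtain ⟨q, hq, -⟩ := key
    rw [← hq]
    exact le_sSup ⟨q, rfl⟩

theorem aux_le {k A : Type*} [Field k] [CommRing A] [Algebra k A] (s n : ℕ)
    (g : MvPolynomial (Fin s) k →ₐ[k] A) (hg : g.IsIntegral)
    (f : MvPolynomial (Fin n) k →ₐ[k] A) (hf : Function.Injective f) : n ≤ s := by
  obtain ⟨P, hP, hPc⟩ := Ideal.exists_comap_eq_of_mem_minimalPrimes_of_injective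
    (f := f.toRingHom) hf ⊥ (by simp [IsDomain.minimalPrimes_eq_singleton_bot])
  let π := Ideal.Quotient.mkₐ k P
  have hinj : Function.Injective (π.comp f) := by
    rw [injective_iff_map_eq_zero]
    intro x hx
    have : f x ∈ P := Ideal.Quotient.eq_zero_iff_mem.mp hx
    have h2 : x ∈ P.comap f.toRingHom := this
    rw [hPc] at h2
    exact h2
  have hind : AlgebraicIndependent k (fun i ↦ π (f (MvPolynomial.X i))) := by
    have : MvPolynomial.aeval (fun i ↦ π (f (MvPolynomial.X i))) = π.comp f := by
      ext; simp
    rw [AlgebraicIndependent, this]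
    exact hinj
  have h1 := hind.lift_cardinalMk_le_trdeg
  let y : Fin s → A ⧸ P := fun i ↦ π (g (MvPolynomial.X i))
  have hrange : Algebra.adjoin k (Set.range y) = (π.comp g).range := by
    rw [Algebra.adjoin_range_eq_range_aeval]
    congr 1
    ext; simp [y]
  have halg : Algebra.IsIntegral (Algebra.adjoin k (Set.range y)) (A ⧸ P) := by
    constructor
    intro z
    obtain ⟨a, rfl⟩ := Ideal.Quotient.mk_surjective z
    obtain ⟨p, hp, hpa⟩ := hg a
    have hmem : ∀ x, (π.comp g) x ∈ Algebra.adjoin k (Set.range y) := fun x ↦ by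
      rw [hrange]; exact ⟨x, rfl⟩
    let φ : MvPolynomial (Fin s) k →ₐ[k] Algebra.adjoin k (Set.range y) :=
      (π.comp g).codRestrict _ hmem
    refine ⟨p.map φ.toRingHom, hp.map _, ?_⟩
    rw [Polynomial.eval₂_map]
    have := congrArg π hpa
    rw [map_zero] at this
    rw [← this]
    exact (Polynomial.hom_eval₂ p (g : MvPolynomial (Fin s) k →+* A) (π : A →+* A ⧸ P) a).symm
  have halg' : Algebra.IsAlgebraic (Algebra.adjoin k (Set.range y)) (A ⧸ P) :=
    ⟨fun z ↦ (halg.isIntegral z).isAlgebraic⟩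
  have h2 := Algebra.IsAlgebraic.trdeg_le_cardinalMk k (Set.range y)
  have h3 : Cardinal.mk (Set.range y) ≤ s := by
    have := Cardinal.mk_range_le_lift (f := y)
    simpa using this
  have h4 := h2.trans h3
  have h5 : (n : Cardinal) ≤ Algebra.trdeg k (A ⧸ P) := by simpa using h1
  exact_mod_cast h5.trans h4


/-- Let `k` be a field and `A` a nonzero finite type commutative `k`-algebra of Krull
dimension `d`. Then (a) there is an injective `k`-algebra homomorphism
`k[x₁, …, x_d] → A`, and (b) any injective `k`-algebra homomorphism `k[x₁, …, x_n] → A`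
satisfies `n ≤ d`: the `k`-transcendence cardinality of `A` equals its Krull dimension. -/
theorem transcendence_cardinality_of_finite_type_algebra
    (k A : Type*) [Field k] [CommRing A] [Nontrivial A] [Algebra k A]
    [Algebra.FiniteType k A] (d : ℕ) (hd : ringKrullDim A = d) :
    (∃ f : MvPolynomial (Fin d) k →ₐ[k] A, Function.Injective f) ∧
      ∀ (n : ℕ) (f : MvPolynomial (Fin n) k →ₐ[k] A), Function.Injective f → n ≤ d := by
  obtain ⟨s, g, hgi, hg⟩ := exists_integral_inj_algHom_of_fg k A
  have hs : s = d := by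
    algebraize [g.toRingHom]
    have : Algebra.IsIntegral (MvPolynomial (Fin s) k) A := ⟨hg⟩
    have h := aux_dim (R := MvPolynomial (Fin s) k) (S := A) hgi
    rw [hd, MvPolynomial.ringKrullDim_of_isNoetherianRing, ringKrullDim_eq_zero_of_field] at h
    simp only [Nat.card_eq_fintype_card, Fintype.card_fin, zero_add] at h
    exact_mod_cast h.symm
  subst hs
  exact ⟨⟨g, hgi⟩, fun n f hf ↦ aux_le s n g hg f hf⟩
end

section
/- Let k be a field, A a commutative k-algebra, and B a commutative k-algebra containing A as a k-subalgebra such that B is finitely generated as an A-module. Then for every natural number m, there exists an injective k-algebra homomorphism from the polynomial ring k[x₁, …, x_m] into B if and only if there exists an injective k-algebra homomorphism from k[x₁, …, x_m] into A. In particular, A has finite k-transcendence cardinality if and only if B does, and in that case the two transcendence cardinalities coincide. -/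
/-- Let `k` be a field, `B` a commutative `k`-algebra, and `A` a `k`-subalgebra of `B` such
that `B` is finitely generated as an `A`-module. Then for every `m`, there is an injective
`k`-algebra homomorphism `k[x₁, …, x_m] → B` iff there is one into `A`; hence `A` and `B`
have the same `k`-transcendence cardinality. -/
theorem transcendence_cardinality_module_finite_extension
    (k B : Type*) [Field k] [CommRing B] [Algebra k B]
    (A : Subalgebra k B) [Module.Finite A B] :
    ∀ m : ℕ,
      (∃ f : MvPolynomial (Fin m) k →ₐ[k] B, Function.Injective f) ↔
        (∃ f : MvPolynomial (Fin m) k →ₐ[k] A, Function.Injective f) := by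
  classical
  intro m
  constructor
  swap
  · rintro ⟨f, hf⟩
    exact ⟨A.val.comp f, Subtype.val_injective.comp hf⟩
  rintro ⟨f, hf⟩
  -- a prime of `B` avoiding the image of the nonzero polynomials
  obtain ⟨P, hP, -, hdisj⟩ := Ideal.exists_le_prime_disjoint (⊥ : Ideal B)
    ((nonZeroDivisors (MvPolynomial (Fin m) k)).map f) (by
      rw [Set.disjoint_left]
      rintro _ h0 ⟨p, hp, rfl⟩
      have h1 : f p = 0 := h0
      exact nonZeroDivisors.ne_zero hp ((map_eq_zero_iff f hf).1 h1))
  have hg : Function.Injective ((Ideal.Quotient.mkₐ k P).comp f) := by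
    rw [injective_iff_map_eq_zero]
    intro p hp
    by_contra hne
    have hmem : f p ∈ P := Ideal.Quotient.eq_zero_iff_mem.1 hp
    exact Set.disjoint_left.1 hdisj hmem ⟨p, mem_nonZeroDivisors_of_ne_zero hne, rfl⟩
  have hy : AlgebraicIndependent k
      (fun i => ((Ideal.Quotient.mkₐ k P).comp f) (MvPolynomial.X i)) := by
    have h := (MvPolynomial.algebraicIndependent_X (Fin m) k).map' hg
    exact h
  let Q : Ideal A := P.under A
  have : Algebra.IsIntegral A B := inferInstance
  have : Algebra.IsIntegral (A ⧸ Q) (B ⧸ P) := inferInstance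
  have : Q.IsPrime := Ideal.IsPrime.under A P
  have : Nontrivial (A ⧸ Q) := Ideal.Quotient.nontrivial_iff.2 (Ideal.IsPrime.ne_top ‹_›)
  have : Algebra.IsAlgebraic (A ⧸ Q) (B ⧸ P) := Algebra.IsIntegral.isAlgebraic
  have : FaithfulSMul k (A ⧸ Q) :=
    (faithfulSMul_iff_algebraMap_injective _ _).2 (algebraMap k (A ⧸ Q)).injective
  obtain ⟨s, hs⟩ := exists_isTranscendenceBasis k (A ⧸ Q)
  have hs' := IsTranscendenceBasis.algebraMap_comp (A := B ⧸ P) hs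
  have hle := hy.lift_cardinalMk_le_trdeg
  rw [← hs'.cardinalMk_eq_trdeg] at hle
  have hle2 : Cardinal.lift.{0} (Cardinal.mk s) ≥ Cardinal.lift (Cardinal.mk (Fin m)) := by
    simpa using hle
  obtain ⟨e⟩ := Cardinal.lift_mk_le'.1 hle2
  choose g hgm using fun x : A ⧸ Q => Ideal.Quotient.mk_surjective x
  have hind : AlgebraicIndependent k (fun i : Fin m => g (e i : A ⧸ Q)) := by
    refine AlgebraicIndependent.of_comp (Ideal.Quotient.mkₐ k Q) ?_
    have h := hs.1.comp e e.injective
    have heq : (Ideal.Quotient.mkₐ k Q : A → A ⧸ Q) ∘ (fun i : Fin m => g (e i : A ⧸ Q))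
        = Subtype.val ∘ e := funext fun i => hgm _
    rw [heq]
    exact h
  exact ⟨MvPolynomial.aeval _, hind⟩
end

section
/- Let k be a field and φ : A → C a homomorphism of commutative k-algebras such that C is finitely generated as an A-module (via φ). Let n be a natural number and suppose that every injective k-algebra homomorphism from a polynomial ring k[x₁, …, x_m] into A satisfies m ≤ n. Then every injective k-algebra homomorphism from a polynomial ring k[x₁, …, x_m] into C also satisfies m ≤ n; i.e., the k-transcendence cardinality of C is at most n. -/
/-- An integral extension of domains does not change the transcendence degree. -/
theorem trdeg_eq_of_integral {k D : Type*} [Field k] [CommRing D] [IsDomain D] [Algebra k D]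
    (S : Subalgebra k D) (h_integral : Algebra.IsIntegral S D) :
    Algebra.trdeg k S = Algebra.trdeg k D := by
  have halg : Algebra.IsAlgebraic S D := Algebra.IsIntegral.isAlgebraic
  rw [← trdeg_add_eq k S (A := D), trdeg_eq_zero (R := S), add_zero]

theorem faithful_of_subalgebra {k D : Type*} [Field k] [CommRing D] [IsDomain D] [Algebra k D]
    (S : Subalgebra k D) : FaithfulSMul k S :=
  (faithfulSMul_iff_algebraMap_injective k S).mpr (algebraMap k S).injective

/-- Let `k` be a field and `φ : A → C` a homomorphism of commutative `k`-algebras making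
`C` a finitely generated `A`-module. If every injective `k`-algebra homomorphism
`k[x₁, …, x_m] → A` satisfies `m ≤ n`, then the same holds for `C`: the
`k`-transcendence cardinality of `C` is at most `n`. -/
theorem transcendence_cardinality_le_of_finite_map
    (k A C : Type*) [Field k] [CommRing A] [Algebra k A] [CommRing C] [Algebra k C]
    (φ : A →ₐ[k] C) (hfin : (φ : A →+* C).Finite) (n : ℕ)
    (hA : ∀ (m : ℕ) (f : MvPolynomial (Fin m) k →ₐ[k] A), Function.Injective f → m ≤ n) :
    ∀ (m : ℕ) (f : MvPolynomial (Fin m) k →ₐ[k] C), Function.Injective f → m ≤ n := by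
  intro m f hf
  -- a prime of `C` meeting the image of `f` only in zero
  obtain ⟨P, hP, -, hdis⟩ := Ideal.exists_le_prime_disjoint (⊥ : Ideal C)
    ((nonZeroDivisors (MvPolynomial (Fin m) k)).map f) (by
      rw [Set.disjoint_left]
      rintro _ h0 ⟨p, hp, rfl⟩
      have h1 : f p = 0 := by simpa using h0
      exact nonZeroDivisors.ne_zero hp (hf (by rw [h1, map_zero])))
  let q : C →ₐ[k] C ⧸ P := Ideal.Quotient.mkₐ k P
  have hg : Function.Injective (q.comp f) := by
    rw [injective_iff_map_eq_zero]
    intro p hp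
    by_contra hne
    have h1 : f p ∈ P := Ideal.Quotient.eq_zero_iff_mem.mp hp
    exact Set.disjoint_left.mp hdis h1 ⟨p, mem_nonZeroDivisors_of_ne_zero hne, rfl⟩
  let ψ : A →ₐ[k] C ⧸ P := q.comp φ
  let S : Subalgebra k (C ⧸ P) := ψ.range
  have h_integral : Algebra.IsIntegral S (C ⧸ P) := by
    constructor
    intro d
    obtain ⟨c, rfl⟩ := Ideal.Quotient.mk_surjective d
    obtain ⟨p, hp, hpc⟩ := hfin.to_isIntegral c
    refine ⟨p.map (ψ.rangeRestrict : A →+* S), hp.map _, ?_⟩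
    rw [Polynomial.eval₂_map]
    have := congrArg (Ideal.Quotient.mk P) hpc
    rw [Polynomial.hom_eval₂, map_zero] at this
    exact this
  have hgi : AlgebraicIndependent k (fun i => q (f (MvPolynomial.X i))) := by
    have : MvPolynomial.aeval (fun i => q (f (MvPolynomial.X i))) = q.comp f := by
      ext i; simp
    rw [AlgebraicIndependent, this]
    exact hg
  have hm : (m : Cardinal) ≤ Algebra.trdeg k S := by
    have := hgi.lift_cardinalMk_le_trdeg
    rw [trdeg_eq_of_integral S h_integral]
    simpa using this
  have hfs : FaithfulSMul k S := faithful_of_subalgebra S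
  obtain ⟨s, hs⟩ := exists_isTranscendenceBasis k S
  rw [← hs.cardinalMk_eq_trdeg] at hm
  obtain ⟨e⟩ : Nonempty (Fin m ↪ s) := by
    rw [← Cardinal.lift_mk_le']
    simpa using hm
  have hy := hs.1.comp e e.injective
  choose a ha using fun i => ψ.rangeRestrict_surjective (e i : S)
  refine hA m (MvPolynomial.aeval a) ?_
  have h2 : ψ.rangeRestrict.comp (MvPolynomial.aeval a) =
      MvPolynomial.aeval ((fun x : s => (x : S)) ∘ e) := by
    ext i
    simp [ha]
  have h3 : Function.Injective (ψ.rangeRestrict.comp (MvPolynomial.aeval a)) := by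
    rw [h2]; exact hy
  exact Function.Injective.of_comp (f := ψ.rangeRestrict) h3
end

section
/- Let k be a field of characteristic zero and A a reduced commutative k-algebra (not assumed noetherian). If the first Hochschild homology HH₁(A/k) = Tor₁^{A ⊗_k A}(A, A) vanishes, then HH_i(A/k) = Tor_i^{A ⊗_k A}(A, A) vanishes for all i ≥ 1. -/
open TensorProduct CategoryTheory

/-- `A` is an algebra over `A ⊗[k] A` via the multiplication map `a ⊗ b ↦ a * b`. -/
noncomputable instance hochschildModuleAlgebra (k A : Type) [CommRing k] [CommRing A]
    [Algebra k A] : Algebra (A ⊗[k] A) A :=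
  (Algebra.TensorProduct.lmul' k (S := A)).toRingHom.toAlgebra

/-- Hochschild homology: `HH_i(A/k) = Tor_i^{A ⊗_k A}(A, A)`. -/
noncomputable def HH (k A : Type) [CommRing k] [CommRing A] [Algebra k A] (i : ℕ) :
    ModuleCat (A ⊗[k] A) :=
  ((Tor (ModuleCat (A ⊗[k] A)) i).obj
      (ModuleCat.of (A ⊗[k] A) A)).obj (ModuleCat.of (A ⊗[k] A) A)

section Aux

/-- Vanishing of `Tor` computed by a projective resolution. -/
lemma subsingleton_Tor_iff {R : Type} [CommRing R] (M N : ModuleCat.{0} R)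
    (P : ProjectiveResolution N) (n : ℕ) :
    Subsingleton (((Tor (ModuleCat.{0} R) (n + 1)).obj M).obj N) ↔
      Function.Exact ((P.complex.d (n + 2) (n + 1)).hom.lTensor M)
        ((P.complex.d (n + 1) n).hom.lTensor M) := by
  rw [← ModuleCat.isZero_iff_subsingleton]
  have e := P.isoLeftDerivedObj ((MonoidalCategory.tensoringLeft (ModuleCat.{0} R)).obj M) (n + 1)
  have e1 := e.isZero_iff
  refine e1.trans ?_
  refine (HomologicalComplex.exactAt_iff_isZero_homology _ _).symm.trans ?_
  rw [HomologicalComplex.exactAt_iff' _ (n + 2) (n + 1) n (by simp only [ChainComplex.prev]; rfl)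
    (by simp)]
  rw [ShortComplex.ShortExact.moduleCat_exact_iff_function_exact]
  rfl

lemma tor_succ_of_flat {R : Type} [CommRing R] (M N : ModuleCat.{0} R) [Module.Flat R M] (n : ℕ) :
    Subsingleton (((Tor (ModuleCat.{0} R) (n + 1)).obj M).obj N) := by
  rw [subsingleton_Tor_iff M N (projectiveResolution N) n]
  apply Module.Flat.lTensor_exact
  have := (projectiveResolution N).exact_succ n
  rw [ShortComplex.ShortExact.moduleCat_exact_iff_function_exact] at this
  exact this

/-- `Tor₁(A, A) = 0` forces the kernel of a surjection `R → A` to be idempotent. -/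
lemma isIdempotentElem_ker_of_tor_one {R A : Type} [CommRing R] [CommRing A] [Algebra R A]
    (hs : Function.Surjective (algebraMap R A))
    (h : Subsingleton (((Tor (ModuleCat.{0} R) 1).obj (ModuleCat.of R A)).obj (ModuleCat.of R A))) :
    IsIdempotentElem (RingHom.ker (algebraMap R A)) := by
  set I := RingHom.ker (algebraMap R A) with hI
  let P := projectiveResolution (ModuleCat.of R A)
  have ex := (subsingleton_Tor_iff _ _ P 0).1 h
  have h0 := P.exact₀
  rw [ShortComplex.ShortExact.moduleCat_exact_iff_function_exact] at h0
  let d : P.complex.X 1 →ₗ[R] P.complex.X 0 := (P.complex.d 1 0).hom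
  let d2 : P.complex.X 2 →ₗ[R] P.complex.X 1 := (P.complex.d 2 1).hom
  let π : P.complex.X 0 →ₗ[R] A := (P.π.f 0).hom
  have hd : Function.Exact d π := h0
  have ex' : Function.Exact (d2.lTensor A) (d.lTensor A) := ex
  have hdd : ∀ z, d (d2 z) = 0 := fun z => by
    have : d ∘ₗ d2 = 0 := by
      have := P.complex.d_comp_d 2 1 0
      exact congrArg ModuleCat.Hom.hom this
    exact LinearMap.congr_fun this z
  have hπ : Function.Surjective π := by
    have : Epi (P.π.f 0) := inferInstance
    exact (ModuleCat.epi_iff_surjective _).1 this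
  have hproj : Module.Projective R (P.complex.X 0) :=
    (IsProjective.iff_projective _).2 (P.projective 0)
  obtain ⟨φ, hφ⟩ := Module.projective_lifting_property (Algebra.linearMap R A) π hs
  have hφ' : ∀ z, algebraMap R A (φ z) = π z := fun z => LinearMap.congr_fun hφ z
  have hψ : ∀ z, φ (d z) ∈ I := fun z => by
    rw [hI, RingHom.mem_ker, hφ']
    exact (hd _).2 ⟨z, rfl⟩
  let ψ : P.complex.X 1 →ₗ[R] I := LinearMap.codRestrict I (φ ∘ₗ d) hψ
  obtain ⟨p, hp⟩ := hπ 1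
  have key : I ≤ I * I := by
    intro x hx
    have hx0 : algebraMap R A x = 0 := hx
    obtain ⟨q, hq⟩ : ∃ q, d q = x • p := (hd _).1 (by
      rw [map_smul, hp, Algebra.smul_def, hx0, zero_mul])
    obtain ⟨t, ht⟩ := (ex' ((1 : A) ⊗ₜ[R] q)).1 (by
      rw [LinearMap.lTensor_tmul, hq, TensorProduct.tmul_smul, TensorProduct.smul_tmul',
        Algebra.smul_def, hx0, zero_mul, TensorProduct.zero_tmul])
    have htt : ∃ z, t = (1 : A) ⊗ₜ[R] z := by
      clear ht
      induction t using TensorProduct.induction_on with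
      | zero => exact ⟨0, by simp⟩
      | tmul a z =>
        obtain ⟨r, rfl⟩ := hs a
        exact ⟨r • z, by rw [TensorProduct.tmul_smul, TensorProduct.smul_tmul',
          Algebra.smul_def, mul_one]⟩
      | add a b ha hb =>
        obtain ⟨z, rfl⟩ := ha
        obtain ⟨w, rfl⟩ := hb
        exact ⟨z + w, (TensorProduct.tmul_add _ _ _).symm⟩
    obtain ⟨z, rfl⟩ := htt
    have hz : (1 : A) ⊗ₜ[R] (q - d2 z) = (0 : A ⊗[R] P.complex.X 1) := by
      rw [TensorProduct.tmul_sub, ← ht, LinearMap.lTensor_tmul, sub_self]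
    -- `A ⊗ P₁ → I / I²`
    let f : R →ₗ[R] P.complex.X 1 →ₗ[R] I.Cotangent :=
      LinearMap.toSpanSingleton R _ (I.toCotangent ∘ₗ ψ)
    have hf : I ≤ LinearMap.ker f := by
      intro r hr
      rw [LinearMap.mem_ker]
      ext y
      change r • I.toCotangent (ψ y) = 0
      rw [← map_smul, Ideal.toCotangent_eq_zero, sq]
      exact Ideal.mul_mem_mul hr (ψ y).2
    let e : (R ⧸ I) ≃ₐ[R] A := Ideal.quotientKerAlgEquivOfSurjective (f := Algebra.ofId R A) hs
    let θ : A ⊗[R] P.complex.X 1 →ₗ[R] I.Cotangent :=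
      TensorProduct.lift ((Submodule.liftQ I f hf) ∘ₗ e.symm.toLinearMap)
    have hθ : ∀ y, θ (1 ⊗ₜ y) = I.toCotangent (ψ y) := fun y => by
      change Submodule.liftQ I f hf (e.symm 1) y = _
      rw [map_one]
      change (1 : R) • I.toCotangent (ψ y) = _
      rw [one_smul]
    have h1 : I.toCotangent (ψ (q - d2 z)) = 0 := by rw [← hθ, hz, map_zero]
    rw [Ideal.toCotangent_eq_zero] at h1
    have h2 : ((ψ (q - d2 z) : I) : R) = x * φ p := by
      change φ (d (q - d2 z)) = _
      rw [map_sub, hdd, sub_zero, hq, map_smul, smul_eq_mul]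
    rw [h2] at h1
    have h3 : 1 - φ p ∈ I := by
      rw [hI, RingHom.mem_ker, map_sub, hφ', hp, map_one, sub_self]
    have : x = x * φ p + x * (1 - φ p) := by ring
    rw [this]
    refine add_mem ?_ (Ideal.mul_mem_mul hx h3)
    rwa [← sq]
  exact le_antisymm Ideal.mul_le_left key

/-- A quotient by a pure ideal is flat. -/
lemma flat_of_pure {R A : Type} [CommRing R] [CommRing A] [Algebra R A]
    (hs : Function.Surjective (algebraMap R A))
    (h : ∀ x ∈ RingHom.ker (algebraMap R A), ∃ e ∈ RingHom.ker (algebraMap R A), (1 - e) * x = 0) :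
    Module.Flat R A := by
  let S : Submonoid R := (⊥ : Submonoid A).comap (algebraMap R A)
  have hS : ∀ s, s ∈ S ↔ algebraMap R A s = 1 := fun s => by
    simp [S]
  have : IsLocalization S A :=
    { map_units := fun s => by rw [(hS _).1 s.2]; exact isUnit_one
      surj := fun z => by
        obtain ⟨r, rfl⟩ := hs z
        exact ⟨(r, 1), by simp⟩
      exists_of_eq := fun {x y} hxy => by
        obtain ⟨e, he, hh⟩ := h (x - y) (by rw [RingHom.mem_ker, map_sub, hxy, sub_self])
        refine ⟨⟨1 - e, (hS _).2 (by rw [map_sub, (RingHom.mem_ker).1 he]; simp)⟩, ?_⟩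
        simpa [mul_sub, sub_eq_zero] using hh }
  exact IsLocalization.flat A S

lemma pure_of_span {R : Type} [CommRing R] (I : Ideal R) (s : Set R) (hs : Ideal.span s = I)
    (h : ∀ x ∈ s, ∃ e ∈ I, (1 - e) * x = 0) : ∀ x ∈ I, ∃ e ∈ I, (1 - e) * x = 0 := by
  intro x hx
  rw [← hs] at hx
  induction hx using Submodule.span_induction with
  | mem x hx => exact h x hx
  | zero => exact ⟨0, zero_mem _, by simp⟩
  | add x y _ _ hx hy =>
    obtain ⟨e, he, h1⟩ := hx
    obtain ⟨f, hf, h2⟩ := hy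
    refine ⟨e + f - e * f, sub_mem (add_mem he hf) (I.mul_mem_right _ he), ?_⟩
    linear_combination (1 - f) * h1 + (1 - e) * h2
  | smul a x _ hx =>
    obtain ⟨e, he, h1⟩ := hx
    exact ⟨e, he, by rw [smul_eq_mul]; linear_combination a * h1⟩

open scoped IntermediateField.algebraAdjoinAdjoin in
/-- In characteristic zero, a field extension without differentials is algebraic. -/
lemma algebraic_of_unramified (k L : Type) [Field k] [CharZero k] [Field L] [Algebra k L]
    [Algebra.FormallyUnramified k L] : Algebra.IsAlgebraic k L := by
  obtain ⟨ι, v, hv⟩ := exists_isTranscendenceBasis' k L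
  have halg := hv.isAlgebraic_field
  let S := Algebra.adjoin k (Set.range v)
  let F := IntermediateField.adjoin k (Set.range v)
  have : CharZero F := charZero_of_injective_algebraMap (algebraMap k F).injective
  have : Algebra.FormallyEtale F L := Algebra.FormallyEtale.of_isSeparable _ L
  have : Algebra.FormallyEtale S F := .of_isLocalization (nonZeroDivisors _)
  have : Algebra.FormallyEtale S L := .comp S F L
  let e : MvPolynomial ι k ≃ₐ[k] S := hv.1.aevalEquiv
  let : Algebra (MvPolynomial ι k) S := e.toRingHom.toAlgebra
  let : Algebra (MvPolynomial ι k) L := ((algebraMap S L).comp e.toRingHom).toAlgebra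
  have : IsScalarTower (MvPolynomial ι k) S L := .of_algebraMap_eq fun _ => rfl
  have : IsScalarTower k (MvPolynomial ι k) L := .of_algebraMap_eq fun x => by
    change _ = algebraMap S L (e (algebraMap k (MvPolynomial ι k) x))
    rw [e.commutes]; rfl
  have : Algebra.FormallyEtale (MvPolynomial ι k) S :=
    .of_equiv (AlgEquiv.ofBijective (Algebra.ofId (MvPolynomial ι k) S) e.bijective)
  have : Algebra.FormallyEtale (MvPolynomial ι k) L := .comp _ S L
  have E := KaehlerDifferential.tensorKaehlerEquivOfFormallyEtale k (MvPolynomial ι k) L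
  let b := (KaehlerDifferential.mvPolynomialBasis k ι).baseChange L
  have hsub : Subsingleton (L ⊗[MvPolynomial ι k] Ω[MvPolynomial ι k⁄k]) := E.toEquiv.subsingleton
  have hι : IsEmpty ι := ⟨fun i => b.ne_zero i (Subsingleton.elim _ _)⟩
  exact hv.isEmpty_iff_isAlgebraic.1 hι

lemma isAlgebraic_elem (k A : Type) [Field k] [CharZero k] [CommRing A] [Algebra k A]
    [Algebra.FormallyUnramified k A] (a : A) : IsAlgebraic k a := by
  by_contra hcon
  rw [isAlgebraic_iff_not_injective, not_not] at hcon
  let S := (nonZeroDivisors (Polynomial k)).map (Polynomial.aeval (R := k) a)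
  obtain ⟨P, hP, -, hd⟩ := Ideal.exists_le_prime_disjoint (⊥ : Ideal A) S (by
    rw [Set.disjoint_left]
    rintro x hx ⟨f, hf, rfl⟩
    have : f = 0 := hcon (by rw [map_zero]; exact hx)
    exact nonZeroDivisors.ne_zero hf this)
  let K := FractionRing (A ⧸ P)
  have : Algebra.FormallyUnramified k (A ⧸ P) := .comp k A _
  have : Algebra.FormallyUnramified (A ⧸ P) K := .of_isLocalization (nonZeroDivisors _)
  have : Algebra.FormallyUnramified k K := .comp k (A ⧸ P) K
  have hK := algebraic_of_unramified k K
  obtain ⟨f, hf, hf0⟩ := hK.isAlgebraic (algebraMap A K a)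
  rw [Polynomial.aeval_algebraMap_apply, IsScalarTower.algebraMap_apply A (A ⧸ P) K,
    FaithfulSMul.algebraMap_eq_zero_iff] at hf0
  exact Set.disjoint_left.1 hd (Ideal.Quotient.eq_zero_iff_mem.1 hf0)
    ⟨f, mem_nonZeroDivisors_of_ne_zero hf, rfl⟩

open Polynomial in
lemma exists_separable (k A : Type) [Field k] [CharZero k] [CommRing A] [Algebra k A]
    [IsReduced A] (a : A) (h : IsAlgebraic k a) : ∃ g : k[X], g.Separable ∧ aeval a g = 0 := by
  classical
  obtain ⟨f, hf, hfa⟩ := h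
  obtain ⟨n, c, hn⟩ := UniqueFactorizationMonoid.exists_dvd_radical_self_pow hf
  refine ⟨UniqueFactorizationMonoid.radical f, PerfectField.separable_iff_squarefree.2
    UniqueFactorizationMonoid.squarefree_radical, ?_⟩
  apply eq_zero_of_pow_eq_zero (n := n)
  rw [← map_pow, hn, map_mul, hfa, zero_mul]

open Polynomial in
/-- Two roots of a separable polynomial: the difference generates an idempotent ideal. -/
lemma exists_mul_sub (k B : Type) [Field k] [CommRing B] [Algebra k B] (g : k[X])
    (hg : g.Separable) (x y : B) (hx : aeval x g = 0) (hy : aeval y g = 0) :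
    ∃ u, (1 - u * (x - y)) * (x - y) = 0 := by
  obtain ⟨s, t, hst⟩ := hg
  have h1 : aeval y t * aeval y (derivative g) = 1 := by
    have := congrArg (aeval y) hst
    simpa [hy] using this
  obtain ⟨c, hc⟩ := (g.map (algebraMap k B)).binomExpansion y (x - y)
  rw [add_sub_cancel, derivative_map, eval_map_algebraMap, eval_map_algebraMap,
    eval_map_algebraMap, hx, hy] at hc
  refine ⟨- (aeval y t * c), ?_⟩
  linear_combination (-(aeval y t)) * hc - (x - y) * h1

end Aux

/-- Let `k` be a field of characteristic zero and `A` a reduced commutative `k`-algebra.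
If the first Hochschild homology `HH₁(A/k) = Tor₁^{A ⊗_k A}(A, A)` vanishes, then
`HH_i(A/k)` vanishes for all `i ≥ 1`. -/
theorem hochschild_homology_rigidity
    (k A : Type) [Field k] [CharZero k] [CommRing A] [Algebra k A] [IsReduced A]
    (h1 : Subsingleton (HH k A 1)) :
    ∀ i : ℕ, 1 ≤ i → Subsingleton (HH k A i) := by
  have hs : Function.Surjective (algebraMap (A ⊗[k] A) A) := fun a =>
    ⟨a ⊗ₜ 1, by
      change Algebra.TensorProduct.lmul' k (a ⊗ₜ[k] (1 : A)) = a
      simp⟩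
  have hker : RingHom.ker (algebraMap (A ⊗[k] A) A) = KaehlerDifferential.ideal k A := rfl
  have hid := isIdempotentElem_ker_of_tor_one hs h1
  rw [hker] at hid
  have hun : Algebra.FormallyUnramified k A :=
    ⟨(Ideal.cotangent_subsingleton_iff _).2 hid⟩
  have hpure := pure_of_span _ _ (KaehlerDifferential.span_range_eq_ideal k A) (by
    rintro _ ⟨a, rfl⟩
    obtain ⟨g, hg, hga⟩ := exists_separable k A a (isAlgebraic_elem k A a)
    obtain ⟨u, hu⟩ := exists_mul_sub k (A ⊗[k] A) g hg ((1 : A) ⊗ₜ[k] a) (a ⊗ₜ[k] (1 : A))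
      (by
        have := Polynomial.aeval_algHom_apply
          (Algebra.TensorProduct.includeRight : A →ₐ[k] A ⊗[k] A) a g
        rw [hga, map_zero] at this
        exact this)
      (by
        have := Polynomial.aeval_algHom_apply
          (Algebra.TensorProduct.includeLeft : A →ₐ[k] A ⊗[k] A) a g
        rw [hga, map_zero] at this
        exact this)
    refine ⟨_, Ideal.mul_mem_left _ u ?_, hu⟩
    rw [← KaehlerDifferential.span_range_eq_ideal k A]
    exact Ideal.subset_span ⟨a, rfl⟩)
  have hflat : Module.Flat (A ⊗[k] A) A := flat_of_pure hs hpure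
  intro i hi
  obtain ⟨n, rfl⟩ := Nat.exists_eq_add_of_le' hi
  exact tor_succ_of_flat (ModuleCat.of (A ⊗[k] A) A) (ModuleCat.of (A ⊗[k] A) A) n
end

section
/- Let k be a field of characteristic zero and L a field extension of k. Let {x_i : i ∈ I} ⊆ L be a transcendence basis of L over k. Then the module of Kähler differentials Ω_{L/k} is a free L-module with basis {dx_i : i ∈ I}; that is, the family (dx_i)_{i ∈ I} is an L-basis of Ω_{L/k}. -/
/-- Let `k` be a field of characteristic zero, `L` a field extension of `k`, and
`{x_i : i ∈ I}` a transcendence basis of `L` over `k`. Then `Ω_{L/k}` is a free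
`L`-module with basis `{dx_i : i ∈ I}`. -/
theorem kaehler_differentials_basis_of_transcendence_basis
    (k L : Type*) [Field k] [CharZero k] [Field L] [Algebra k L]
    (I : Type*) (x : I → L) (hx : IsTranscendenceBasis k x) :
    LinearIndependent L (fun i => KaehlerDifferential.D k L (x i)) ∧
      Submodule.span L (Set.range fun i => KaehlerDifferential.D k L (x i)) = ⊤ := by
  let P := MvPolynomial I k
  let : Algebra P L := (MvPolynomial.aeval x).toRingHom.toAlgebra
  have hmap : ∀ p : P, algebraMap P L p = MvPolynomial.aeval x p := fun _ => rfl
  have : IsScalarTower k P L := IsScalarTower.of_algebraMap_eq fun r => by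
    rw [hmap, MvPolynomial.algebraMap_eq, MvPolynomial.aeval_C]
  have : FaithfulSMul P L := (faithfulSMul_iff_algebraMap_injective P L).mpr hx.1
  let : Algebra (FractionRing P) L := FractionRing.liftAlgebra P L
  have : IsScalarTower P (FractionRing P) L := inferInstance
  have : Algebra.IsAlgebraic P L := by
    have h := hx.isAlgebraic
    refine ⟨fun y => ?_⟩
    refine (h.isAlgebraic y).of_ringHom_of_comp_eq
      (hx.1.aevalEquiv : P →+* _) (RingHom.id L) hx.1.aevalEquiv.surjective
        Function.injective_id ?_
    ext z <;> simp [hmap, P]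
  have : Algebra.IsAlgebraic (FractionRing P) L :=
    (IsFractionRing.comap_isAlgebraic_iff (A := P)).mp inferInstance
  have : CharZero (FractionRing P) :=
    charZero_of_injective_algebraMap (R := k) (algebraMap k (FractionRing P)).injective
  have : Algebra.FormallyEtale (FractionRing P) L := Algebra.FormallyEtale.of_isSeparable _ _
  have : Algebra.FormallyEtale P (FractionRing P) :=
    Algebra.FormallyEtale.of_isLocalization (nonZeroDivisors P)
  have : Algebra.FormallyEtale P L := Algebra.FormallyEtale.comp P (FractionRing P) L
  let b := ((KaehlerDifferential.mvPolynomialBasis k I).baseChange L).map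
    (KaehlerDifferential.tensorKaehlerEquivOfFormallyEtale k P L)
  have hb : (fun i => KaehlerDifferential.D k L (x i)) = b := by
    funext i
    simp [b, P, hmap]
  rw [hb]
  exact ⟨b.linearIndependent, b.span_eq⟩
end

section
/- Let k be a field of characteristic zero, d a natural number, and A a commutative k-algebra (not assumed noetherian) such that the module of (d+1)-forms ⋀^{d+1}_A Ω_{A/k} = 0. Then every finite type k-subalgebra of A has Krull dimension at most d, and the Krull dimension of A itself is at most d. -/
/-- A field extension of a characteristic zero field is formally smooth. -/
lemma formallySmooth_of_charZero_field (K L : Type*) [Field K] [CharZero K] [Field L]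
    [Algebra K L] : Algebra.FormallySmooth K L := by
  obtain ⟨ι, x, hx⟩ := exists_isTranscendenceBasis' K L
  have := hx.isAlgebraic_field
  exact Algebra.FormallySmooth.of_algebraicIndependent_of_isSeparable hx.1

/-- If `P ⊆ L` with `P` a domain over a char zero field then `L` is formally smooth over `P`. -/
lemma formallySmooth_of_domain (P L : Type*) [CommRing P] [IsDomain P] [CharZero P] [Field L]
    [Algebra P L] [FaithfulSMul P L] : Algebra.FormallySmooth P L := by
  let := FractionRing.liftAlgebra P L
  have : CharZero (FractionRing P) := charZero_of_injective_algebraMap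
    (IsFractionRing.injective P (FractionRing P))
  have := formallySmooth_of_charZero_field (FractionRing P) L
  have : Algebra.FormallySmooth P (FractionRing P) := .of_isLocalization (nonZeroDivisors P)
  exact .comp P (FractionRing P) L

open TensorProduct in
lemma linearIndependent_D (k L σ : Type*) [Field k] [CharZero k] [Field L] [Algebra k L]
    [Algebra (MvPolynomial σ k) L] [IsScalarTower k (MvPolynomial σ k) L]
    [FaithfulSMul (MvPolynomial σ k) L] :
    LinearIndependent L (fun i : σ =>
      KaehlerDifferential.D k L (algebraMap (MvPolynomial σ k) L (.X i))) := by
  have hs := formallySmooth_of_domain (MvPolynomial σ k) L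
  have hsub : Subsingleton (Algebra.H1Cotangent (MvPolynomial σ k) L) :=
    hs.subsingleton_h1Cotangent
  have hinj : Function.Injective (KaehlerDifferential.mapBaseChange k (MvPolynomial σ k) L) := by
    rw [injective_iff_map_eq_zero]
    intro a ha
    obtain ⟨b, rfl⟩ := (Algebra.H1Cotangent.exact_δ_mapBaseChange k (MvPolynomial σ k) L a).1 ha
    rw [Subsingleton.elim b 0, map_zero]
  have hb := ((KaehlerDifferential.mvPolynomialBasis k σ).baseChange L).linearIndependent
  have := hb.map' (KaehlerDifferential.mapBaseChange k (MvPolynomial σ k) L)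
    (LinearMap.ker_eq_bot.2 hinj)
  have he : (fun i : σ => KaehlerDifferential.D k L (algebraMap (MvPolynomial σ k) L (.X i))) =
      ⇑(KaehlerDifferential.mapBaseChange k (MvPolynomial σ k) L) ∘
        ⇑(Module.Basis.baseChange L (KaehlerDifferential.mvPolynomialBasis k σ)) := by
    ext i
    simp
  rw [he]
  exact this

/-- Vanishing of `(d+1)`-forms bounds the number of algebraically independent elements. -/
lemma not_injective_of_vanishing
    (k A : Type*) [Field k] [CharZero k] [CommRing A] [Algebra k A] (d : ℕ)
    (h : Subsingleton (⋀[A]^(d + 1) (Ω[A⁄k]))) (n : ℕ) (hn : d + 1 ≤ n)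
    (f : MvPolynomial (Fin n) k →ₐ[k] A) (hf : Function.Injective f) : False := by
  obtain ⟨p, hp, hpf⟩ := Ideal.exists_comap_eq_of_mem_minimalPrimes_of_injective
    (f := f.toRingHom) hf ⊥ (by simp [IsDomain.minimalPrimes_eq_singleton_bot])
  let L := p.ResidueField
  let g : MvPolynomial (Fin n) k →ₐ[k] L := (IsScalarTower.toAlgHom k A L).comp f
  have hg : Function.Injective g := by
    rw [injective_iff_map_eq_zero]
    intro a ha
    have h1 : f a ∈ p := by
      rw [← Ideal.algebraMap_residueField_eq_zero (I := p)]
      exact ha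
    have h2 : a ∈ Ideal.comap f.toRingHom p := h1
    rw [hpf] at h2
    exact h2
  let : Algebra (MvPolynomial (Fin n) k) L := g.toRingHom.toAlgebra
  have : IsScalarTower k (MvPolynomial (Fin n) k) L :=
    IsScalarTower.of_algebraMap_eq fun x => (g.commutes x).symm
  have : FaithfulSMul (MvPolynomial (Fin n) k) L :=
    (faithfulSMul_iff_algebraMap_injective _ _).2 hg
  have hli := linearIndependent_D k L (Fin n)
  have hli' := hli.comp (Fin.castLE hn) (Fin.castLE_injective hn)
  -- a linear map sending the differentials to the standard basis
  obtain ⟨φ, hφ⟩ : ∃ φ : Ω[L⁄k] →ₗ[L] (Fin (d + 1) → L), ∀ i,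
      φ (KaehlerDifferential.D k L (algebraMap (MvPolynomial (Fin n) k) L
        (.X (Fin.castLE hn i)))) = Pi.single i 1 := by
    let w : Fin (d + 1) → Ω[L⁄k] := fun i => KaehlerDifferential.D k L
      (algebraMap (MvPolynomial (Fin n) k) L (.X (Fin.castLE hn i)))
    have hw : LinearIndependent L w := hli'
    obtain ⟨φ, hφ⟩ := LinearMap.exists_extend (p := Submodule.span L (Set.range w))
      ((Module.Basis.span hw).constr L (fun i => (Pi.single i 1 : Fin (d + 1) → L)))
    refine ⟨φ, fun i => ?_⟩
    have h1 := LinearMap.congr_fun hφ (Module.Basis.span hw i)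
    rw [Module.Basis.constr_basis, LinearMap.comp_apply, Submodule.subtype_apply,
      Module.Basis.span_apply] at h1
    exact h1
  let ψ : Ω[A⁄k] →ₗ[A] (Fin (d + 1) → L) :=
    (φ.restrictScalars A) ∘ₗ KaehlerDifferential.map k k A L
  let G : (Ω[A⁄k]) [⋀^Fin (d + 1)]→ₗ[A] L :=
    { (Matrix.detRowAlternating (R := L) (n := Fin (d + 1))).toMultilinearMap.restrictScalars A
        |>.compLinearMap (fun _ => ψ) with
      map_eq_zero_of_eq' := by
        intro v i j hv hij
        exact (Matrix.detRowAlternating (R := L) (n := Fin (d + 1))).map_eq_zero_of_eq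
          (fun i => ψ (v i)) (by simp [hv]) hij }
  let v : Fin (d + 1) → Ω[A⁄k] := fun i =>
    KaehlerDifferential.D k A (f (.X (Fin.castLE hn i)))
  have h0 : G v = 0 := by
    rw [← exteriorPower.alternatingMapLinearEquiv_apply_ιMulti G v,
      Subsingleton.elim (exteriorPower.ιMulti A (d + 1) v) 0, map_zero]
  have hψ : ∀ i, ψ (v i) = Pi.single i 1 := by
    intro i
    rw [← hφ i]
    simp only [ψ, v, LinearMap.comp_apply, LinearMap.restrictScalars_apply,
      KaehlerDifferential.map_D]
    rfl
  have h1 : G v = 1 := by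
    change Matrix.det (fun i => ψ (v i)) = 1
    rw [← Matrix.det_one (n := Fin (d + 1)) (R := L)]
    congr 1
    ext i j
    rw [hψ, Matrix.one_eq_pi_single]
  exact one_ne_zero (h1.symm.trans h0)

lemma fg_bound
    (k A : Type*) [Field k] [CharZero k] [CommRing A] [Algebra k A] (d : ℕ)
    (h : Subsingleton (⋀[A]^(d + 1) (Ω[A⁄k])))
    (B : Subalgebra k A) (hB : B.FG) : ringKrullDim B ≤ d := by
  have : Algebra.FiniteType k B := B.fg_iff_finiteType.1 hB
  cases subsingleton_or_nontrivial B
  · rw [ringKrullDim_eq_bot_of_subsingleton]; exact bot_le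
  obtain ⟨n, g, hg, hint⟩ := exists_integral_inj_algHom_of_fg k B
  have hn : n ≤ d := by
    by_contra hlt
    exact not_injective_of_vanishing k A d h n (by omega) (B.val.comp g)
      (Subtype.val_injective.comp hg)
  let : Algebra (MvPolynomial (Fin n) k) B := g.toRingHom.toAlgebra
  have : Algebra.IsIntegral (MvPolynomial (Fin n) k) B := ⟨hint⟩
  have h1 : ringKrullDim B ≤ ringKrullDim (MvPolynomial (Fin n) k) :=
    Order.krullDim_le_of_strictMono
      (PrimeSpectrum.comap (algebraMap (MvPolynomial (Fin n) k) B))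
      (fun I J hIJ => Ideal.IsIntegral.comap_lt_comap (I := I.asIdeal) (J := J.asIdeal) hIJ)
  refine h1.trans ?_
  rw [MvPolynomial.ringKrullDim_of_isNoetherianRing, ringKrullDim_eq_zero_of_field]
  simpa using hn

/-- Let `k` be a field of characteristic zero and `A` a commutative `k`-algebra (not
assumed noetherian) with `⋀^{d+1}_A Ω_{A/k} = 0`. Then every finite type `k`-subalgebra of
`A` has Krull dimension at most `d`, and the Krull dimension of `A` is at most `d`. -/
theorem krull_dimension_le_of_vanishing_forms
    (k A : Type*) [Field k] [CharZero k] [CommRing A] [Algebra k A] (d : ℕ)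
    (h : Subsingleton (⋀[A]^(d + 1) (Ω[A⁄k]))) :
    (∀ B : Subalgebra k A, B.FG → ringKrullDim B ≤ d) ∧ ringKrullDim A ≤ d := by
  refine ⟨fg_bound k A d h, ?_⟩
  refine iSup_le fun s => ?_
  have hlt : ∀ i : Fin s.length, ∃ a, a ∈ (s i.succ).asIdeal ∧ a ∉ (s i.castSucc).asIdeal := by
    intro i
    exact Set.exists_of_ssubset (s.step i)
  choose a ha ha' using hlt
  let B : Subalgebra k A := Algebra.adjoin k (Set.range a)
  have hB : B.FG := Subalgebra.fg_def.2 ⟨_, Set.finite_range a, rfl⟩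
  refine le_trans ?_ (fg_bound k A d h B hB)
  let t : LTSeries (PrimeSpectrum B) :=
    { length := s.length
      toFun := fun i => PrimeSpectrum.comap (algebraMap B A) (s i)
      step := fun i => by
        change PrimeSpectrum.comap (algebraMap B A) (s i.castSucc) <
          PrimeSpectrum.comap (algebraMap B A) (s i.succ)
        refine (lt_iff_le_not_ge).2 ⟨?_, ?_⟩
        · exact Ideal.comap_mono (s.step i).le
        · intro hle
          exact ha' i (@hle ⟨a i, Algebra.subset_adjoin ⟨i, rfl⟩⟩ (ha i)) }
  exact le_iSup (fun p : LTSeries (PrimeSpectrum B) => ((p.length : ℕ∞) : WithBot ℕ∞)) t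
end
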